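/- There exist a Banach space Z and a closed linear subspace Y of Z such that Y is isomorphic (as a Banach space) to c₀, the quotient Z/Y is isomorphic to c₀(Γ) for an index set Γ of cardinality 𝔠 (the continuum), and Z is not a C-space. Moreover, Z can be chosen to be a 1-complemented subspace of C(L) for some compact Hausdorff space L. -/

import Mathlib

open scoped ZeroAtInfty

/-- A Banach space is a *C-space* if it is isomorphic (via a continuous linear
equivalence) to `C(K, ℝ)` for some compact Hausdorff space `K`. -/
def IsCSpace (X : Type*) [NormedAddCommGroup X] [NormedSpace ℝ X] : Prop :=
  ∃ (K : Type) (_ : TopologicalSpace K) (_ : CompactSpace K) (_ : T2Space K),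
    Nonempty (X ≃L[ℝ] C(K, ℝ))

section OddFunctions

open Function Set

/-- The bounded sequence `k ↦ ∑ j, ν k j * g j`. -/
noncomputable def pairing (ν : ℕ → ℕ → ℝ) (g : ℕ → ℤ) (k : ℕ) : ℝ := ∑' j, ν k j * g j

/-- The rows of `ν` are uniformly bounded in `ℓ₁` and the diagonal is bounded away from `0`. -/
def HasLargeDiagonal (ν : ℕ → ℕ → ℝ) : Prop :=
  (∃ C, ∀ k, ∀ F : Finset ℕ, ∑ j ∈ F, |ν k j| ≤ C) ∧ ∀ k, 1 ≤ |ν k k|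

theorem rosenthal_aux (δ : ℝ) (n : ℕ) : ∀ b : ℕ → ℕ → ℝ,
    (∀ k, ∀ F : Finset ℕ, k ∉ F → ∑ j ∈ F, b k j ≤ (n + 1) * δ) →
    ∃ h : ℕ → ℕ, Injective h ∧ ∀ k, ∀ F : Finset ℕ, k ∉ F → ∑ j ∈ F, b (h k) (h j) ≤ δ := by
  induction n with
  | zero => exact fun b hb => ⟨id, injective_id, by simpa using hb⟩
  | succ n ih =>
    intro b hb
    by_cases H : ∃ p, ∀ k, ∀ F : Finset ℕ, k ∉ F →
        ∑ j ∈ F, b (Nat.pair p k) (Nat.pair p j) ≤ δ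
    · obtain ⟨p, hp⟩ := H
      exact ⟨Nat.pair p, fun i j hij => (Nat.pair_eq_pair.1 hij).2, hp⟩
    · push Not at H
      choose i s his hs using H
      obtain ⟨h, hinj, hh⟩ := ih (fun p q => b (Nat.pair p (i p)) (Nat.pair q (i q))) (by
        intro p F hpF
        have key := hb (Nat.pair p (i p))
          (F.image (fun q => Nat.pair q (i q)) ∪ (s p).image (Nat.pair p)) (by
            simp only [Finset.mem_union, Finset.mem_image, Nat.pair_eq_pair, not_or, not_exists,
              not_and]
            refine ⟨fun q hq hqp => ?_, fun q hq _ hqi => his p (hqi ▸ hq)⟩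
            exact absurd hq (hqp ▸ hpF))
        rw [Finset.sum_union, Finset.sum_image, Finset.sum_image] at key
        · have := hs p
          push_cast at key
          linarith
        · intro x _ y _ hxy; exact (Nat.pair_eq_pair.1 hxy).2
        · intro x _ y _ hxy; exact (Nat.pair_eq_pair.1 hxy).1
        · rw [Finset.disjoint_left]
          intro x hx hx'
          obtain ⟨q, hq, rfl⟩ := Finset.mem_image.1 hx
          obtain ⟨r, hr, hrq⟩ := Finset.mem_image.1 hx'
          exact hpF ((Nat.pair_eq_pair.1 hrq).1 ▸ hq))
      exact ⟨fun p => Nat.pair (h p) (i (h p)),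
        fun x y hxy => hinj (Nat.pair_eq_pair.1 hxy).1, hh⟩

/-- Rosenthal's lemma, along an injective sequence. -/
theorem rosenthal {a : ℕ → ℕ → ℝ} {C δ : ℝ} (hδ : 0 < δ)
    (hC : ∀ k, ∀ F : Finset ℕ, ∑ j ∈ F, a k j ≤ C) {f : ℕ → ℕ} (hf : Injective f) :
    ∃ h : ℕ → ℕ, Injective h ∧
      ∀ k, ∀ F : Finset ℕ, k ∉ F → ∑ j ∈ F, a (f (h k)) (f (h j)) ≤ δ := by
  obtain ⟨n, hn⟩ := exists_nat_ge (C / δ)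
  refine rosenthal_aux δ n (fun k j => a (f k) (f j)) fun k F _ => ?_
  have h1 := hC (f k) (F.image f)
  rw [Finset.sum_image hf.injOn] at h1
  rw [div_le_iff₀ hδ] at hn
  linarith

/-- The node of length `n` on the branch `x` of the binary tree. -/
def branchNode (x : ℕ → Bool) (n : ℕ) : ℕ := Encodable.encode ((List.range n).map x)

theorem branchNode_inj {x y : ℕ → Bool} {m n : ℕ} (h : branchNode x m = branchNode y n) :
    m = n ∧ ∀ i < n, x i = y i := by
  have h1 := Encodable.encode_injective h
  have h2 : m = n := by simpa using congrArg List.length h1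
  subst h2
  exact ⟨rfl, by simpa using h1⟩

theorem branchNode_injective (x : ℕ → Bool) : Injective (branchNode x) :=
  fun _ _ h => (branchNode_inj h).1

theorem finite_range_branchNode_inter {x y : ℕ → Bool} (h : x ≠ y) :
    (range (branchNode x) ∩ range (branchNode y)).Finite := by
  obtain ⟨i, hi⟩ := Function.ne_iff.1 h
  refine ((Set.finite_Iic i).image (branchNode x)).subset ?_
  rintro _ ⟨⟨m, rfl⟩, ⟨n, hn⟩⟩
  refine ⟨m, ?_, rfl⟩
  obtain ⟨rfl, h2⟩ := branchNode_inj hn.symm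
  by_contra hlt
  exact hi (h2 i (by simpa using hlt))

theorem abs_pairing_sub_le {ν : ℕ → ℕ → ℝ} {f : ℕ → ℕ} (hf : Injective f) {k : ℕ} {δ : ℝ}
    (hδ : ∀ F : Finset ℕ, k ∉ F → ∑ j ∈ F, |ν (f k) (f j)| ≤ δ) {φ : ℕ → ℤ}
    (hφ : ∀ m, |φ m| ≤ 1) :
    |pairing ν (extend f φ 0) (f k) - ν (f k) (f k) * φ k| ≤ δ := by
  have h1 : pairing ν (extend f φ 0) (f k) = ∑' m, ν (f k) (f m) * φ m := by
    rw [pairing, ← hf.tsum_eq]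
    · simp [hf.extend_apply]
    · intro j hj
      by_contra hn
      exact hj (by simp [extend_apply' _ _ _ (by simpa using hn)])
  have hb : ∀ m, |ν (f k) (f m) * φ m| ≤ |ν (f k) (f m)| := fun m => by
    rw [abs_mul]
    exact mul_le_of_le_one_right (abs_nonneg _) (by exact_mod_cast hφ m)
  have hδ' : ∀ F : Finset ℕ, ∑ j ∈ F, |if j = k then 0 else ν (f k) (f j) * φ j| ≤ δ := by
    intro F
    refine le_trans ?_ (hδ (F.erase k) (by simp))
    rw [← Finset.sum_erase F (a := k) (by simp)]
    exact Finset.sum_le_sum fun j hj => by simpa [Finset.ne_of_mem_erase hj] using hb j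
  have hs0 : Summable fun j => |if j = k then 0 else ν (f k) (f j) * φ j| :=
    summable_of_sum_le (fun _ => abs_nonneg _) hδ'
  have hs : Summable fun m => ν (f k) (f m) * φ m := by
    refine (hs0.of_abs.add (hasSum_ite_eq k (ν (f k) (f k) * φ k)).summable).congr fun j => ?_
    by_cases h : j = k <;> simp [h]
  have h2 : ∑' m, ν (f k) (f m) * φ m - ν (f k) (f k) * φ k =
      ∑' m, if m = k then 0 else ν (f k) (f m) * φ m := by
    rw [hs.tsum_eq_add_tsum_ite k, add_sub_cancel_left]
  rw [h1, h2]
  simp only [← Real.norm_eq_abs] at hs0 hδ' ⊢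
  exact (norm_tsum_le_tsum_norm hs0).trans (hs0.tsum_le_of_sum_le hδ')

/-- On the range of an injective sequence there is an almost disjoint family of signed sets, indexed
by the branches of the binary tree, such that the rows of `ν` distinguish its members. -/
theorem exists_signed_family (ν : ℕ → ℕ → ℝ) {f₀ : ℕ → ℕ} (hf₀ : Injective f₀) :
    ∃ H : (ℕ → Bool) → ℕ → ℤ, (∀ x j, |H x j| ≤ 1) ∧ (∀ x, support (H x) ⊆ range f₀) ∧
      (∀ x y, x ≠ y → (support (H x) ∩ support (H y)).Finite) ∧
      (HasLargeDiagonal ν → ∀ x y, x ≠ y →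
        (∃ k, 9 / 10 ≤ pairing ν (H x) k ∧ |pairing ν (H y) k| ≤ 1 / 10) ∧
        ∃ k, pairing ν (H x) k ≤ -(9 / 10) ∧ |pairing ν (H y) k| ≤ 1 / 10) := by
  obtain ⟨f, hf, hff₀, hfν⟩ : ∃ f : ℕ → ℕ, Injective f ∧ range f ⊆ range f₀ ∧
      (HasLargeDiagonal ν →
        ∀ k, ∀ F : Finset ℕ, k ∉ F → ∑ j ∈ F, |ν (f k) (f j)| ≤ 1 / 10) := by
    by_cases hν : HasLargeDiagonal ν
    · obtain ⟨⟨C, hC⟩, -⟩ := hν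
      obtain ⟨h, hh, hh'⟩ := rosenthal (a := fun k j => |ν k j|) (δ := 1 / 10) (by norm_num) hC hf₀
      exact ⟨f₀ ∘ h, hf₀.comp hh, range_comp_subset_range _ _, fun _ => hh'⟩
    · exact ⟨f₀, hf₀, subset_rfl, fun h => absurd h hν⟩
  classical
  let σ : ℕ → ℤ := fun m => if 0 ≤ ν (f m) (f m) then 1 else -1
  let φ : (ℕ → Bool) → ℕ → ℤ := fun x m =>
    if m / 2 ∈ range (branchNode x) then (if m % 2 = 0 then 1 else -1) * σ m else 0
  have hφ : ∀ x m, |φ x m| ≤ 1 := fun x m => by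
    simp only [φ, σ]; split_ifs <;> simp
  have hsupp : ∀ x j, extend f (φ x) 0 j ≠ 0 → ∃ m, f m = j ∧ m / 2 ∈ range (branchNode x) := by
    intro x j hj
    by_cases h : ∃ m, f m = j
    · obtain ⟨m, rfl⟩ := h
      refine ⟨m, rfl, ?_⟩
      by_contra hm
      exact hj (by rw [hf.extend_apply]; simp only [φ]; rw [if_neg hm])
    · exact absurd (extend_apply' _ _ _ h) hj
  refine ⟨fun x => extend f (φ x) 0, fun x j => ?_, fun x j hj => ?_, fun x y hxy => ?_,
    fun hν x y hxy => ?_⟩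
  · by_cases h : ∃ m, f m = j
    · obtain ⟨m, rfl⟩ := h
      simpa only [hf.extend_apply] using hφ x m
    · simp [extend_apply' _ _ _ h]
  · obtain ⟨m, rfl, -⟩ := hsupp x j hj
    exact hff₀ (mem_range_self m)
  · have hfin := finite_range_branchNode_inter hxy
    have : ((· / 2) ⁻¹' (range (branchNode x) ∩ range (branchNode y)) : Set ℕ).Finite := by
      obtain ⟨M, hM⟩ := hfin.bddAbove
      refine (Set.finite_Iio (2 * (M + 1))).subset fun m hm => ?_
      have : m / 2 ≤ M := hM hm
      simp only [mem_Iio]; omega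
    refine (this.image f).subset ?_
    rintro j ⟨h1, h2⟩
    obtain ⟨m, rfl, hm⟩ := hsupp x j h1
    obtain ⟨m', hm', hm''⟩ := hsupp y _ h2
    obtain rfl := hf hm'
    exact ⟨_, ⟨hm, hm''⟩, rfl⟩
  · obtain ⟨b, hbx, hby⟩ : ∃ b, b ∈ range (branchNode x) ∧ b ∉ range (branchNode y) := by
      by_contra! h
      refine Set.infinite_range_of_injective (branchNode_injective x)
        ((finite_range_branchNode_inter hxy).subset fun b hb => ⟨hb, h b hb⟩)
    have hσ : ∀ m, 1 ≤ ν (f m) (f m) * σ m := fun m => by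
      have := hν.2 (f m)
      simp only [σ]; split_ifs with h0
      · rw [abs_of_nonneg h0] at this; simpa using this
      · rw [abs_of_neg (not_le.1 h0)] at this; push_cast; linarith
    have key : ∀ z m, |pairing ν (extend f (φ z) 0) (f m) - ν (f m) (f m) * φ z m| ≤ 1 / 10 :=
      fun z m => abs_pairing_sub_le hf (hfν hν m) (hφ z)
    have hy0 : ∀ m, m / 2 = b → |pairing ν (extend f (φ y) 0) (f m)| ≤ 1 / 10 := fun m hm => by
      have := key y m
      rwa [show φ y m = 0 by simp only [φ]; rw [if_neg (hm ▸ hby)], Int.cast_zero, mul_zero,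
        sub_zero] at this
    refine ⟨⟨f (2 * b), ?_, hy0 _ (by omega)⟩, ⟨f (2 * b + 1), ?_, hy0 _ (by omega)⟩⟩
    · have h1 := abs_le.1 (key x (2 * b))
      rw [show φ x (2 * b) = σ (2 * b) by
        simp only [φ]; rw [if_pos (by rwa [Nat.mul_div_cancel_left _ two_pos])]; simp] at h1
      have := hσ (2 * b)
      linarith [h1.1]
    · have h1 := abs_le.1 (key x (2 * b + 1))
      rw [show φ x (2 * b + 1) = - σ (2 * b + 1) by
        simp only [φ]; rw [if_pos (by rwa [show (2 * b + 1) / 2 = b by omega])]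
        simp [Nat.add_mod]] at h1
      have := hσ (2 * b + 1)
      push_cast at h1
      linarith [h1.2]

theorem summable_mul_of_sum_le {a b : ℕ → ℝ} {C D : ℝ} (hC : ∀ F : Finset ℕ, ∑ j ∈ F, |a j| ≤ C)
    (hb : ∀ j, |b j| ≤ D) : Summable fun j => a j * b j := by
  have h1 : Summable fun j => |a j| * D :=
    (summable_of_sum_le (fun _ => abs_nonneg _) hC).mul_right D
  refine Summable.of_abs (h1.of_nonneg_of_le (fun _ => abs_nonneg _) fun j => ?_)
  rw [abs_mul]
  exact mul_le_mul_of_nonneg_left (hb j) (abs_nonneg _)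

theorem abs_tsum_mul_le {a b : ℕ → ℝ} {C : ℝ} (hC : ∀ F : Finset ℕ, ∑ j ∈ F, |a j| ≤ C)
    (hb : ∀ j, |b j| ≤ 1) : |∑' j, a j * b j| ≤ C := by
  have h1 : Summable fun j => ‖a j * b j‖ := (summable_mul_of_sum_le hC hb).norm
  refine (norm_tsum_le_tsum_norm h1).trans (h1.tsum_le_of_sum_le fun F => ?_)
  refine (Finset.sum_le_sum fun j _ => ?_).trans (hC F)
  rw [Real.norm_eq_abs, abs_mul]
  exact mul_le_of_le_one_right (abs_nonneg _) (hb j)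

/-- The pairings with the members of the family `g`, the columns of `ν`, and the sequences `c i`. -/
noncomputable def generators (ν c : ℕ → ℕ → ℝ) {S : Type} (g : S → ℕ → ℤ) :
    S ⊕ ℕ ⊕ ℕ → ℕ → ℝ :=
  Sum.elim (fun s => pairing ν (g s)) (Sum.elim (fun j k => ν k j) c)

/-- The rational span of `generators ν c g`. -/
noncomputable def generatedSpan (ν c : ℕ → ℕ → ℝ) {S : Type} (g : S → ℕ → ℤ) :
    Submodule ℚ (ℕ → ℝ) :=
  Submodule.span ℚ (range (generators ν c g))

/-- The sequence `v` is at supremum distance less than `1 / 10` from some member of `W`. -/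
def IsApprox (W : Submodule ℚ (ℕ → ℝ)) (v : ℕ → ℝ) : Prop :=
  ∃ ρ : ℚ, ρ < 1 / 10 ∧ ∃ w ∈ W, ∀ k, |v k - w k| ≤ ρ

theorem IsApprox.mono {W W' : Submodule ℚ (ℕ → ℝ)} (h : W ≤ W') {v : ℕ → ℝ}
    (hv : IsApprox W v) : IsApprox W' v := by
  obtain ⟨ρ, hρ, w, hw, hvw⟩ := hv
  exact ⟨ρ, hρ, w, h hw, hvw⟩

/-- If infinitely many almost disjoint `g x` yield the same approximation of `v`, then averaging
shows that they are not needed at all. -/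
theorem isApprox_of_infinite {ν : ℕ → ℕ → ℝ} {C : ℝ}
    (hC : ∀ k, ∀ F : Finset ℕ, ∑ j ∈ F, |ν k j| ≤ C) {O : Type} {g : O → ℕ → ℤ}
    (hg : ∀ x j, |g x j| ≤ 1)
    (had : ∀ x y, x ≠ y → (support (g x) ∩ support (g y)).Finite) {Φ : Set O} (hΦ : Φ.Infinite)
    {W : Submodule ℚ (ℕ → ℝ)} (hW : ∀ j, (fun k => ν k j) ∈ W) {w : ℕ → ℝ} (hw : w ∈ W)
    {r ρ : ℚ} (hρ : ρ < 1 / 10) {v : ℕ → ℝ}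
    (hv : ∀ x ∈ Φ, ∀ k, |v k - (w k + r * pairing ν (g x) k)| ≤ ρ) : IsApprox W v := by
  classical
  have hC0 : 0 ≤ C := by simpa using hC 0 ∅
  have hρ' : (0 : ℝ) < 1 / 10 - ρ := by
    have : (ρ : ℝ) < ((1 / 10 : ℚ) : ℝ) := by exact_mod_cast hρ
    push_cast at this; linarith
  obtain ⟨m, hm⟩ := exists_nat_gt (|(r : ℝ)| * C * 2 / (1 / 10 - ρ))
  have hm0 : (0 : ℝ) < m := lt_of_le_of_lt (by positivity) hm
  rw [div_lt_iff₀ hρ'] at hm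
  obtain ⟨s, hsΦ, hsm⟩ := hΦ.exists_subset_card_eq m
  have hfin : (⋃ p ∈ s.offDiag, support (g p.1) ∩ support (g p.2)).Finite :=
    s.offDiag.finite_toSet.biUnion fun p hp => had _ _ (Finset.mem_offDiag.1 hp).2.2
  let F := hfin.toFinset
  let u : ℕ → ℤ := fun j => ∑ x ∈ s, g x j
  have hu : ∀ j ∉ F, |u j| ≤ 1 := by
    intro j hj
    by_cases h : ∃ x ∈ s, g x j ≠ 0
    · obtain ⟨x, hx, hxj⟩ := h
      have : u j = g x j := by
        refine Finset.sum_eq_single x (fun y hy hyx => ?_) (fun h => absurd hx h)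
        by_contra hyj
        refine hj (hfin.mem_toFinset.2 (mem_iUnion₂.2 ⟨(x, y), ?_, hxj, hyj⟩))
        exact Finset.mem_offDiag.2 ⟨hx, hy, hyx.symm⟩
      exact this ▸ hg x j
    · push Not at h
      simp [u, Finset.sum_eq_zero h]
  have hsum : ∀ x k, Summable fun j => ν k j * (g x j : ℝ) := fun x k =>
    summable_mul_of_sum_le (hC k) (D := 1) fun j => by exact_mod_cast hg x j
  have hpu : ∀ k, ∑ x ∈ s, pairing ν (g x) k =
      ∑ j ∈ F, ν k j * u j + ∑' j, ν k j * (if j ∈ F then 0 else (u j : ℝ)) := by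
    intro k
    have h1 : HasSum (fun j => ν k j * (u j : ℝ)) (∑ x ∈ s, pairing ν (g x) k) := by
      have h : HasSum (fun j => ∑ x ∈ s, ν k j * (g x j : ℝ)) (∑ x ∈ s, pairing ν (g x) k) :=
        hasSum_sum (L := .unconditional ℕ) fun x _ => (hsum x k).hasSum
      simpa [u, Finset.mul_sum] using h
    have h2 : HasSum (fun j => if j ∈ F then ν k j * (u j : ℝ) else 0)
        (∑ j ∈ F, ν k j * u j) := by
      have := hasSum_sum_of_ne_finset_zero (s := F) (L := .unconditional ℕ)
        (f := fun j => if j ∈ F then ν k j * (u j : ℝ) else 0) (by intro b hb; simp [hb])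
      rwa [Finset.sum_congr rfl fun j hj => if_pos hj] at this
    have h3 := h1.sub h2
    have h4 : (fun j => ν k j * (u j : ℝ) - if j ∈ F then ν k j * (u j : ℝ) else 0) =
        fun j => ν k j * (if j ∈ F then 0 else (u j : ℝ)) := by
      funext j; split_ifs <;> simp
    rw [h4] at h3
    rw [h3.tsum_eq]; ring
  refine ⟨ρ + (1 / 10 - ρ) / 2, by linarith, w + ∑ j ∈ F, (r / m * u j : ℚ) • fun k => ν k j,
    W.add_mem hw (W.sum_mem fun j _ => W.smul_mem _ (hW j)), fun k => ?_⟩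
  have hT : |∑' j, ν k j * (if j ∈ F then 0 else (u j : ℝ))| ≤ C := by
    refine abs_tsum_mul_le (hC k) fun j => ?_
    split_ifs with h
    · simp
    · exact_mod_cast hu j h
  have hkey : |∑ x ∈ s, (v k - (w k + r * pairing ν (g x) k))| ≤ m * ρ := by
    refine (Finset.abs_sum_le_sum_abs _ _).trans ?_
    refine (Finset.sum_le_sum fun x hx => hv x (hsΦ hx) k).trans ?_
    simp [hsm]
  have hexp : ∑ x ∈ s, (v k - (w k + r * pairing ν (g x) k)) =
      m * (v k - w k) - r * ∑ x ∈ s, pairing ν (g x) k := by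
    simp only [← sub_sub, Finset.sum_sub_distrib, ← Finset.mul_sum]
    simp [hsm]; ring
  rw [hexp, hpu] at hkey
  set T := ∑' j, ν k j * (if j ∈ F then 0 else (u j : ℝ))
  set A := ∑ j ∈ F, ν k j * (u j : ℝ) with hA
  have hwA : (w + ∑ j ∈ F, (r / m * u j : ℚ) • fun k => ν k j) k = w k + r / m * A := by
    simp only [Pi.add_apply, Finset.sum_apply, Pi.smul_apply, Rat.smul_def, hA, Finset.mul_sum]
    congr 1
    refine Finset.sum_congr rfl fun j _ => ?_
    push_cast; ring
  rw [hwA]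
  have hrT : |(r : ℝ) * T| ≤ |(r : ℝ)| * C := by
    rw [abs_mul]; exact mul_le_mul_of_nonneg_left hT (abs_nonneg _)
  have hmul : (m : ℝ) * |v k - (w k + r / m * A)| ≤ m * ρ + |(r : ℝ)| * C := by
    rw [← abs_of_pos hm0, ← abs_mul, abs_of_pos hm0]
    have : (m : ℝ) * (v k - (w k + r / m * A)) =
        (m * (v k - w k) - r * (A + T)) + r * T := by
      field_simp; ring
    rw [this]
    exact (abs_add_le _ _).trans (add_le_add hkey hrT)
  push_cast
  refine le_of_mul_le_mul_left (hmul.trans ?_) hm0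
  linarith

/-- Members of a signed family distinguished by the rows of `ν` have pairings whose absolute values
are not approximated in the same way. -/
theorem not_both_approx {s t s' t' : ℝ} (hs : 9 / 10 ≤ s) (ht : |t| ≤ 1 / 10)
    (hs' : s' ≤ -(9 / 10)) (ht' : |t'| ≤ 1 / 10) {r ρ w w' : ℝ} (hρ : ρ < 1 / 10)
    (h1 : |(|s|) - (w + r * s)| ≤ ρ) (h2 : |(|t|) - (w + r * t)| ≤ ρ)
    (h3 : |(|s'|) - (w' + r * s')| ≤ ρ) (h4 : |(|t'|) - (w' + r * t')| ≤ ρ) : False := by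
  rw [abs_of_nonneg (by linarith : 0 ≤ s)] at h1
  rw [abs_of_nonpos (by linarith : s' ≤ 0)] at h3
  have e1 := abs_le.1 h1
  have e2 := abs_le.1 h2
  have e3 := abs_le.1 h3
  have e4 := abs_le.1 h4
  have a1 := abs_nonneg t
  have a2 := abs_nonneg t'
  have f1 := abs_le.1 ht
  have f2 := abs_le.1 ht'
  rcases le_total 0 r with hr | hr
  · have b1 : r * t' ≤ r * (1 / 10) := mul_le_mul_of_nonneg_left f2.2 hr
    have b2 : r * (-(1 / 10)) ≤ r * t' := mul_le_mul_of_nonneg_left f2.1 hr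
    have b3 : r * s' ≤ r * (-(9 / 10)) := mul_le_mul_of_nonneg_left hs' hr
    linarith
  · have b1 : r * (1 / 10) ≤ r * t := mul_le_mul_of_nonpos_left f1.2 hr
    have b2 : r * t ≤ r * (-(1 / 10)) := mul_le_mul_of_nonpos_left f1.1 hr
    have b3 : r * s ≤ r * (9 / 10) := mul_le_mul_of_nonpos_left hs hr
    linarith

section Recursion

open Cardinal

theorem mk_finsupp_lt_continuum {S : Type} (hS : #S < 𝔠) : #((S ⊕ ℕ ⊕ ℕ) →₀ ℚ) < 𝔠 := by
  have : #(S ⊕ ℕ ⊕ ℕ) < 𝔠 := by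
    rw [mk_sum, lift_id, lift_id]
    exact add_lt_of_lt aleph0_le_continuum hS (by simp [aleph0_lt_continuum])
  rw [mk_finsupp_of_infinite]
  exact max_lt this (by simp [aleph0_lt_continuum])

variable {I : Type} [LinearOrder I]

/-- The property of a choice `x` at the stage `ζ` (given the choices `a` at earlier stages): the
sequence `|pairing (ν ζ) (G ζ x)|` is not approximated at this stage, and for `ξ < ζ` the sequence
attached to `ξ` does not become approximated. -/
def IsAdmissible (ν c : I → ℕ → ℕ → ℝ) (G : I → (ℕ → Bool) → ℕ → ℤ) (a : I → ℕ → Bool)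
    (ζ : I) (x : ℕ → Bool) : Prop :=
  ∀ ξ ≤ ζ, HasLargeDiagonal (ν ξ) →
    IsApprox (generatedSpan (ν ξ) (c ξ) (fun η : Iio ζ => G η (a η)) ⊔
      Submodule.span ℚ {pairing (ν ξ) (G ζ x)})
      (fun k => |pairing (ν ξ) (G ξ (update a ζ x ξ)) k|) →
    ξ < ζ ∧ IsApprox (generatedSpan (ν ξ) (c ξ) (fun η : Iio ζ => G η (a η)))
      (fun k => |pairing (ν ξ) (G ξ (a ξ)) k|)

theorem IsAdmissible.congr {ν c : I → ℕ → ℕ → ℝ} {G : I → (ℕ → Bool) → ℕ → ℤ} {a b : I → ℕ → Bool}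
    {ζ : I} {x : ℕ → Bool} (h : IsAdmissible ν c G a ζ x) (hab : ∀ η < ζ, a η = b η) :
    IsAdmissible ν c G b ζ x := by
  have h1 : (fun η : Iio ζ => G η (a η)) = fun η : Iio ζ => G η (b η) :=
    funext fun η => by rw [hab η η.2]
  intro ξ hξ hd happ
  rcases hξ.eq_or_lt with rfl | hlt
  · have := h ξ le_rfl hd
    rw [h1] at this
    simp only [update_self] at this happ
    exact absurd (this happ).1 (lt_irrefl _)
  · have := h ξ hξ hd
    rw [h1, update_of_ne hlt.ne, hab ξ hlt] at this
    rw [update_of_ne hlt.ne] at happ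
    exact this happ

variable [WellFoundedLT I]

theorem exists_isAdmissible (hI : #I = 𝔠) (hord : ord #I = Ordinal.type ((· < ·) : I → I → Prop))
    (ν c : I → ℕ → ℕ → ℝ) (G : I → (ℕ → Bool) → ℕ → ℤ)
    (hG : ∀ ζ x j, |G ζ x j| ≤ 1)
    (had : ∀ ζ x y, x ≠ y → (support (G ζ x) ∩ support (G ζ y)).Finite)
    (hdist : ∀ ζ, HasLargeDiagonal (ν ζ) → ∀ x y, x ≠ y →
        (∃ k, 9 / 10 ≤ pairing (ν ζ) (G ζ x) k ∧ |pairing (ν ζ) (G ζ y) k| ≤ 1 / 10) ∧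
        ∃ k, pairing (ν ζ) (G ζ x) k ≤ -(9 / 10) ∧ |pairing (ν ζ) (G ζ y) k| ≤ 1 / 10)
    (a : I → ℕ → Bool) (ζ : I) : ∃ x, IsAdmissible ν c G a ζ x := by
  by_contra! hbad
  let gen : I → (Iio ζ ⊕ ℕ ⊕ ℕ) → ℕ → ℝ :=
    fun ξ => generators (ν ξ) (c ξ) (fun η : Iio ζ => G η (a η))
  have hcode : ∀ x, ∃ p : Iic ζ × ℚ × ℚ × ((Iio ζ ⊕ ℕ ⊕ ℕ) →₀ ℚ),
      HasLargeDiagonal (ν p.1) ∧ p.2.2.1 < 1 / 10 ∧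
      (∀ k, |(|pairing (ν p.1) (G p.1 (update a ζ x p.1)) k|) -
        ((p.2.2.2.sum fun i b => b • gen p.1 i) k +
          p.2.1 * pairing (ν p.1) (G ζ x) k)| ≤ p.2.2.1) ∧
      ((p.1 : I) < ζ → ¬ IsApprox (generatedSpan (ν p.1) (c p.1) (fun η : Iio ζ => G η (a η)))
        (fun k => |pairing (ν p.1) (G p.1 (a p.1)) k|)) := by
    intro x
    have := hbad x
    simp only [IsAdmissible, not_forall, not_and] at this
    obtain ⟨ξ, hξ, hd, ⟨ρ, hρ, w, hw, hvw⟩, hn⟩ := this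
    obtain ⟨w₁, hw₁, w₂, hw₂, rfl⟩ := Submodule.mem_sup.1 hw
    obtain ⟨r, rfl⟩ := Submodule.mem_span_singleton.1 hw₂
    obtain ⟨q, rfl⟩ := Finsupp.mem_span_range_iff_exists_finsupp.1 hw₁
    refine ⟨⟨⟨ξ, hξ⟩, r, ρ, q⟩, hd, hρ, fun k => ?_, hn⟩
    simpa [Rat.smul_def] using hvw k
  choose p hp using hcode
  have hlt : #(Iic ζ × ℚ × ℚ × ((Iio ζ ⊕ ℕ ⊕ ℕ) →₀ ℚ)) < #(ℕ → Bool) := by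
    have h1 : #(Iic ζ) < 𝔠 := hI ▸ mk_Iic_lt ζ hord (hI ▸ aleph0_le_continuum)
    have h2 : #(Iio ζ) < 𝔠 := hI ▸ mk_Iio_lt ζ hord
    have h3 : #(ℕ → Bool) = 𝔠 := by simp
    rw [h3]
    simp only [mk_prod, lift_id]
    have hQ : #ℚ < 𝔠 := by simp [aleph0_lt_continuum]
    exact mul_lt_of_lt aleph0_le_continuum h1 (mul_lt_of_lt aleph0_le_continuum hQ
      (mul_lt_of_lt aleph0_le_continuum hQ (mk_finsupp_lt_continuum h2)))
  obtain ⟨⟨⟨ξ, hξ⟩, r, ρ, q⟩, hinf⟩ := exists_infinite_fiber p hlt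
  have hinf' : (p ⁻¹' {⟨⟨ξ, hξ⟩, r, ρ, q⟩}).Infinite := Set.infinite_coe_iff.1 hinf
  have hmem : ∀ x ∈ p ⁻¹' {(⟨⟨ξ, hξ⟩, r, ρ, q⟩ : Iic ζ × ℚ × ℚ × ((Iio ζ ⊕ ℕ ⊕ ℕ) →₀ ℚ))},
      HasLargeDiagonal (ν ξ) ∧ ρ < 1 / 10 ∧
      (∀ k, |(|pairing (ν ξ) (G ξ (update a ζ x ξ)) k|) -
        ((q.sum fun i b => b • gen ξ i) k + r * pairing (ν ξ) (G ζ x) k)| ≤ ρ) ∧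
      (ξ < ζ → ¬ IsApprox (generatedSpan (ν ξ) (c ξ) (fun η : Iio ζ => G η (a η)))
        (fun k => |pairing (ν ξ) (G ξ (a ξ)) k|)) := by
    intro x hx
    have := hp x
    rwa [show p x = _ from hx] at this
  obtain ⟨x₀, hx₀⟩ := hinf'.nonempty
  obtain ⟨hd, hρ, -, hn⟩ := hmem x₀ hx₀
  rcases hξ.eq_or_lt with rfl | hlt
  · obtain ⟨y₀, hy₀, hxy⟩ := hinf'.nontrivial.exists_ne x₀
    have e1 := (hmem x₀ hx₀).2.2.1
    have e2 := (hmem y₀ hy₀).2.2.1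
    simp only [update_self] at e1 e2
    obtain ⟨⟨k, hk, hk'⟩, ⟨l, hl, hl'⟩⟩ := hdist ξ hd x₀ y₀ hxy.symm
    have hρ' : (ρ : ℝ) < 1 / 10 := by
      have : (ρ : ℝ) < ((1 / 10 : ℚ) : ℝ) := by exact_mod_cast hρ
      push_cast at this; exact this
    exact not_both_approx hk hk' hl hl' hρ' (e1 k) (e2 k) (e1 l) (e2 l)
  · obtain ⟨C, hC⟩ := hd.1
    refine hn hlt (isApprox_of_infinite (W := Submodule.span ℚ (range (gen ξ))) hC (hG ζ) (had ζ)
      hinf'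
      (fun j => Submodule.subset_span ⟨Sum.inr (Sum.inl j), rfl⟩)
      (Finsupp.mem_span_range_iff_exists_finsupp.2 ⟨q, rfl⟩) hρ (r := r) fun x hx k => ?_)
    have := (hmem x hx).2.2.1 k
    rwa [update_of_ne hlt.ne] at this

theorem exists_forall_isAdmissible {ν c : I → ℕ → ℕ → ℝ} {G : I → (ℕ → Bool) → ℕ → ℤ}
    (H : ∀ a ζ, ∃ x, IsAdmissible ν c G a ζ x) : ∃ a : I → ℕ → Bool,
      ∀ ζ, IsAdmissible ν c G a ζ (a ζ) := by
  classical
  choose X hX using H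
  let step : ∀ ζ : I, (∀ η, η < ζ → ℕ → Bool) → ℕ → Bool := fun ζ ih =>
    X (fun η => if h : η < ζ then ih η h else fun _ => false) ζ
  let a : I → ℕ → Bool := (wellFounded_lt (α := I)).fix step
  refine ⟨a, fun ζ => ?_⟩
  have ha : a ζ = X (fun η => if η < ζ then a η else fun _ => false) ζ := by
    have := (wellFounded_lt (α := I)).fix_eq step ζ
    exact this
  rw [ha]
  exact (hX _ ζ).congr fun η hη => by simp [hη]

/-- For an admissible family of choices, no sequence is ever approximated. -/
theorem not_isApprox_of_isAdmissible {ν c : I → ℕ → ℕ → ℝ} {G : I → (ℕ → Bool) → ℕ → ℤ}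
    {a : I → ℕ → Bool} (ha : ∀ ζ, IsAdmissible ν c G a ζ (a ζ)) {ξ : I}
    (hξ : HasLargeDiagonal (ν ξ)) :
    ¬ IsApprox (generatedSpan (ν ξ) (c ξ) (fun η => G η (a η)))
      (fun k => |pairing (ν ξ) (G ξ (a ξ)) k|) := by
  classical
  let W : Set I → Submodule ℚ (ℕ → ℝ) := fun S =>
    generatedSpan (ν ξ) (c ξ) (fun η : S => G (η : I) (a (η : I)))
  let v : ℕ → ℝ := fun k => |pairing (ν ξ) (G ξ (a ξ)) k|
  have hmono : ∀ S T : Set I, S ⊆ T → W S ≤ W T := by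
    intro S T hST
    refine Submodule.span_mono ?_
    rintro _ ⟨s | s, rfl⟩
    exacts [⟨Sum.inl ⟨s, hST s.2⟩, rfl⟩, ⟨Sum.inr s, rfl⟩]
  have hIic : ∀ ζ, W (Iic ζ) ≤ W (Iio ζ) ⊔ Submodule.span ℚ {pairing (ν ξ) (G ζ (a ζ))} := by
    intro ζ
    refine Submodule.span_le.2 ?_
    rintro _ ⟨⟨s, hs⟩ | s, rfl⟩
    · rcases (mem_Iic.1 hs).eq_or_lt with rfl | hlt
      · exact Submodule.mem_sup_right (Submodule.mem_span_singleton_self _)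
      · exact Submodule.mem_sup_left (Submodule.subset_span ⟨Sum.inl ⟨s, hlt⟩, rfl⟩)
    · exact Submodule.mem_sup_left (Submodule.subset_span ⟨Sum.inr s, rfl⟩)
  have hfinite : ∀ S : Set I, ∀ w ∈ W S, ∃ F : Finset I, (F : Set I) ⊆ S ∧ w ∈ W F := by
    intro S w hw
    induction hw using Submodule.span_induction with
    | mem w hw =>
      obtain ⟨s | s, rfl⟩ := hw
      · exact ⟨{(s : I)}, by simp, Submodule.subset_span ⟨Sum.inl ⟨s, by simp⟩, rfl⟩⟩
      · exact ⟨∅, by simp, Submodule.subset_span ⟨Sum.inr s, rfl⟩⟩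
    | zero => exact ⟨∅, by simp, Submodule.zero_mem _⟩
    | add w w' _ _ h h' =>
      obtain ⟨F, hF, hw⟩ := h
      obtain ⟨F', hF', hw'⟩ := h'
      exact ⟨F ∪ F', by simp [hF, hF'], Submodule.add_mem _ (hmono _ _ (by simp) hw)
        (hmono _ _ (by simp) hw')⟩
    | smul r w _ h =>
      obtain ⟨F, hF, hw⟩ := h
      exact ⟨F, hF, Submodule.smul_mem _ _ hw⟩
  have hlow : ∀ ζ, ξ ≤ ζ → ¬ IsApprox (W (Iic ζ)) v := by
    intro ζ
    induction ζ using WellFoundedLT.induction with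
    | ind ζ ih =>
      intro hζ happ
      have h1 := ha ζ ξ hζ hξ
      rw [update_eq_self] at h1
      obtain ⟨hlt, ρ, hρ, w, hw, hvw⟩ := h1 (happ.mono (hIic ζ))
      obtain ⟨F, hF, hwF⟩ := hfinite _ w hw
      have hne : (insert ξ F).Nonempty := Finset.insert_nonempty _ _
      refine ih ((insert ξ F).max' hne) ?_ (Finset.le_max' _ _ (by simp))
        ⟨ρ, hρ, w, hmono _ _ (fun η hη => Finset.le_max' _ _ (by simp_all)) hwF, hvw⟩
      refine (Finset.max'_lt_iff _ _).2 fun η hη => ?_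
      rcases Finset.mem_insert.1 hη with rfl | hη
      exacts [hlt, hF hη]
  intro happ
  have hle : generatedSpan (ν ξ) (c ξ) (fun η => G η (a η)) ≤ W univ := by
    refine Submodule.span_mono ?_
    rintro _ ⟨s | s, rfl⟩
    exacts [⟨Sum.inl ⟨s, mem_univ _⟩, rfl⟩, ⟨Sum.inr s, rfl⟩]
  obtain ⟨ρ, hρ, w, hw, hvw⟩ := happ.mono hle
  obtain ⟨F, -, hwF⟩ := hfinite _ w hw
  exact hlow ((insert ξ F).max' (Finset.insert_nonempty _ _)) (Finset.le_max' _ _ (by simp))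
    ⟨ρ, hρ, w, hmono _ _ (fun η hη => Finset.le_max' _ _ (by simp_all)) hwF, hvw⟩

end Recursion

open Cardinal in
/-- There is an almost disjoint family of `𝔠` signed sets such that, for every countable family of
sequences `c` and every matrix `ν` with large diagonal, for all but countably many members `g ξ` the
sequence `|pairing ν (g ξ)|` is far from the span of the pairings, the columns of `ν` and `c`. -/
theorem exists_good_family : ∃ (I : Type) (g : I → ℕ → ℤ), #I = 𝔠 ∧ (∀ ξ j, |g ξ j| ≤ 1) ∧
    (∀ ξ η, ξ ≠ η → (support (g ξ) ∩ support (g η)).Finite) ∧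
    ∀ ν c : ℕ → ℕ → ℝ, HasLargeDiagonal ν → ∀ S : Set I, S.Countable → ∃ ξ ∉ S,
      ¬ IsApprox (generatedSpan ν c g) (fun k => |pairing ν (g ξ) k|) := by
  let I : Type := (𝔠 : Cardinal.{0}).ord.ToType
  have hI : #I = 𝔠 := mk_ord_toType _
  have hord : ord #I = Ordinal.type ((· < ·) : I → I → Prop) := by simp [I]
  obtain ⟨e⟩ : Nonempty (I ≃ (ℕ → Bool)) := Cardinal.eq.1 (by rw [hI]; simp)
  obtain ⟨d⟩ : Nonempty (I ≃ (ℕ → ℕ → ℝ) × (ℕ → ℕ → ℝ) × ℝ) := 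
    Cardinal.eq.1 (by rw [hI]; simp [mk_real, continuum_power_aleph0, continuum_mul_self])
  choose G hG hsupp had hdist using fun ζ : I =>
    exists_signed_family (d ζ).1 (branchNode_injective (e ζ))
  obtain ⟨a, ha⟩ := exists_forall_isAdmissible
    (exists_isAdmissible hI hord (fun ζ => (d ζ).1) (fun ζ => (d ζ).2.1) G hG had hdist)
  refine ⟨I, fun ζ => G ζ (a ζ), hI, fun ζ => hG ζ _, fun ξ η hξη => ?_, fun ν c hν S hS => ?_⟩
  · exact (finite_range_branchNode_inter (e.injective.ne hξη)).subset
      (inter_subset_inter (hsupp _ _) (hsupp _ _))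
  · have hinj : Injective fun t : ℝ => d.symm (ν, c, t) := fun s t h => by simpa using h
    obtain ⟨t, ht⟩ : ∃ t : ℝ, d.symm (ν, c, t) ∉ S := by
      by_contra! h
      exact Set.not_countable_univ ((hS.preimage hinj).mono fun t _ => h t)
    refine ⟨_, ht, ?_⟩
    have := not_isApprox_of_isAdmissible ha (ξ := d.symm (ν, c, t)) (by simpa using hν)
    simpa using this

/-- An almost disjoint family of signed subsets of `ℕ`. -/
structure SignedFamily (I : Type) where
  /-- The sign of the natural number `j` in the member `ξ`, or `0` if it is not an element. -/
  sgn : I → ℕ → ℤ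
  abs_sgn_le : ∀ ξ j, |sgn ξ j| ≤ 1
  finite_inter : ∀ ξ η, ξ ≠ η → (support (sgn ξ) ∩ support (sgn η)).Finite

namespace SignedFamily

variable {I : Type} (g : SignedFamily I)

open Classical in
/-- The isolated point attached to `n`, in coordinates. -/
noncomputable def isolatedCoords (n : ℕ) : ℕ ⊕ I → ℝ :=
  Sum.elim (Pi.single n 1) (fun ξ => g.sgn ξ n)

open Classical in
/-- The limit point attached to `ξ`, in coordinates. -/
noncomputable def limitCoords (ξ : I) : ℕ ⊕ I → ℝ := Sum.elim 0 (Pi.single ξ 1)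

/-- The set of all points `± isolatedCoords n`, `± limitCoords ξ` and `0`. -/
def carrier : Set (ℕ ⊕ I → ℝ) :=
  {x | x = 0 ∨ (∃ n, x = g.isolatedCoords n ∨ x = -g.isolatedCoords n) ∨
    ∃ ξ, x = limitCoords ξ ∨ x = -limitCoords ξ}

theorem carrier_eq : g.carrier =
    {x | (∀ j, x j ∈ ({-1, 0, 1} : Set ℝ)) ∧
      (∀ n, x (.inl n) = 0 ∨ x ∈ ({g.isolatedCoords n, -g.isolatedCoords n} : Set _)) ∧
      ∀ ξ η, ξ ≠ η → x (.inr ξ) = 0 ∨ x (.inr η) = 0 ∨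
        x ∈ ⋃ n ∈ support (g.sgn ξ) ∩ support (g.sgn η),
          ({g.isolatedCoords n, -g.isolatedCoords n} : Set _)} := by
  classical
  have hval : ∀ ξ n, (g.sgn ξ n : ℝ) = -1 ∨ (g.sgn ξ n : ℝ) = 0 ∨ (g.sgn ξ n : ℝ) = 1 := by
    intro ξ n
    have := abs_le.1 (g.abs_sgn_le ξ n)
    have : g.sgn ξ n = -1 ∨ g.sgn ξ n = 0 ∨ g.sgn ξ n = 1 := by omega
    exact_mod_cast this
  ext x
  constructor
  · rintro (rfl | ⟨n, hn⟩ | ⟨ξ, hξ⟩)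
    · simp
    · refine ⟨?_, fun m => ?_, fun ξ η _ => ?_⟩
      · rintro (m | ξ)
        · rcases hn with rfl | rfl <;> by_cases h : m = n <;>
            simp [isolatedCoords, h]
        · rcases hn with rfl | rfl <;> rcases hval ξ n with h | h | h <;>
            simp [isolatedCoords, h]
      · by_cases h : m = n
        · exact Or.inr (h ▸ hn)
        · left
          rcases hn with rfl | rfl <;> simp [isolatedCoords, h]
      · by_cases hξ : g.sgn ξ n = 0
        · left; rcases hn with rfl | rfl <;> simp [isolatedCoords, hξ]
        by_cases hη : g.sgn η n = 0
        · right; left; rcases hn with rfl | rfl <;> simp [isolatedCoords, hη]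
        exact Or.inr (Or.inr (mem_iUnion₂.2 ⟨n, ⟨hξ, hη⟩, hn⟩))
    · refine ⟨?_, fun m => ?_, fun η ζ hne => ?_⟩
      · rintro (m | η)
        · rcases hξ with rfl | rfl <;> simp [limitCoords]
        · rcases hξ with rfl | rfl <;> by_cases h : η = ξ <;>
            simp [limitCoords, h]
      · left; rcases hξ with rfl | rfl <;> simp [limitCoords]
      · by_cases h : η = ξ
        · subst h
          right; left
          rcases hξ with rfl | rfl <;> simp [limitCoords, hne.symm]
        · left; rcases hξ with rfl | rfl <;> simp [limitCoords, h]
  · rintro ⟨h1, h2, h3⟩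
    by_cases hn : ∃ n, x (.inl n) ≠ 0
    · obtain ⟨n, hn⟩ := hn
      exact Or.inr (Or.inl ⟨n, (h2 n).resolve_left hn⟩)
    push Not at hn
    by_cases hξ : ∃ ξ, x (.inr ξ) ≠ 0
    · obtain ⟨ξ, hξ⟩ := hξ
      by_cases hη : ∃ η, ξ ≠ η ∧ x (.inr η) ≠ 0
      · obtain ⟨η, hne, hη⟩ := hη
        obtain ⟨n, -, hn⟩ := mem_iUnion₂.1 (((h3 ξ η hne).resolve_left hξ).resolve_left hη)
        exact Or.inr (Or.inl ⟨n, hn⟩)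
      · push Not at hη
        refine Or.inr (Or.inr ⟨ξ, ?_⟩)
        rcases h1 (.inr ξ) with h | h | h
        · right
          funext j
          rcases j with m | η
          · simp [limitCoords, hn]
          · by_cases he : η = ξ
            · subst he; simp [limitCoords, h]
            · simp [limitCoords, he, hη η (Ne.symm he)]
        · exact absurd h hξ
        · left
          funext j
          rcases j with m | η
          · simp [limitCoords, hn]
          · by_cases he : η = ξ
            · subst he; simpa [limitCoords] using h
            · simp [limitCoords, he, hη η (Ne.symm he)]
    · push Not at hξ
      left
      funext j
      rcases j with m | ξ
      exacts [hn m, hξ ξ]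

theorem isCompact_carrier : IsCompact g.carrier := by
  have hcl : IsClosed g.carrier := by
    have hpair : ∀ n, ({g.isolatedCoords n, -g.isolatedCoords n} : Set _).Finite :=
      fun n => Set.toFinite _
    rw [carrier_eq]
    simp only [ofPred_and, ofPred_forall, ofPred_or, imp_iff_not_or]
    refine .inter (isClosed_iInter fun j => ?_) (.inter (isClosed_iInter fun n => ?_)
      (isClosed_iInter fun ξ => isClosed_iInter fun η => ?_))
    · exact (Set.toFinite ({-1, 0, 1} : Set ℝ)).isClosed.preimage (continuous_apply j)
    · exact (isClosed_eq (continuous_apply _) continuous_const).union (hpair n).isClosed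
    · by_cases h : ξ = η
      · simp [h]
      · exact (isClosed_iInter fun _ => isClosed_const).union
          ((isClosed_eq (continuous_apply _) continuous_const).union
          ((isClosed_eq (continuous_apply _) continuous_const).union
            ((g.finite_inter ξ η h).biUnion fun n _ => hpair n).isClosed))
  refine (isCompact_univ_pi fun _ => isCompact_Icc (a := (-1 : ℝ)) (b := 1)).of_isClosed_subset
    hcl fun x hx => ?_
  rw [carrier_eq] at hx
  intro j _
  rcases hx.1 j with h | h | h <;> rw [h] <;> norm_num

/-- The compact space attached to the family `g`. -/
abbrev Space : Type := g.carrier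

instance : CompactSpace g.Space := isCompact_iff_compactSpace.1 g.isCompact_carrier

instance : Neg g.Space where
  neg x := ⟨-x.1, by
    obtain ⟨x, rfl | ⟨n, h⟩ | ⟨ξ, h⟩⟩ := x
    · left; simp
    · exact Or.inr (Or.inl ⟨n, h.symm.imp (fun h => by simp [h]) (fun h => by simp [h])⟩)
    · exact Or.inr (Or.inr ⟨ξ, h.symm.imp (fun h => by simp [h]) (fun h => by simp [h])⟩)⟩

instance : Zero g.Space where
  zero := ⟨0, Or.inl rfl⟩

@[simp] theorem coe_neg (x : g.Space) : (↑(-x) : ℕ ⊕ I → ℝ) = -↑x := rfl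

@[simp] theorem coe_zero : (↑(0 : g.Space) : ℕ ⊕ I → ℝ) = 0 := rfl

theorem neg_neg' (x : g.Space) : - -x = x := Subtype.ext (by simp)

theorem neg_zero' : -(0 : g.Space) = 0 := Subtype.ext (by simp)

theorem continuous_neg' : Continuous fun x : g.Space => -x :=
  Continuous.subtype_mk (continuous_subtype_val.neg) _

/-- The isolated point attached to `n`. -/
noncomputable def isolatedPt (n : ℕ) : g.Space :=
  ⟨g.isolatedCoords n, Or.inr (Or.inl ⟨n, Or.inl rfl⟩)⟩

/-- The limit point attached to `ξ`. -/
noncomputable def limitPt (ξ : I) : g.Space := ⟨limitCoords ξ, Or.inr (Or.inr ⟨ξ, Or.inl rfl⟩)⟩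

@[simp] theorem isolatedPt_inl_self (n : ℕ) : (g.isolatedPt n).1 (.inl n) = 1 := by
  simp [isolatedPt, isolatedCoords]

theorem isolatedPt_inl (n m : ℕ) : (g.isolatedPt n).1 (.inl m) = if m = n then 1 else 0 := by
  simp [isolatedPt, isolatedCoords, Pi.single_apply]

@[simp] theorem isolatedPt_inr (n : ℕ) (ξ : I) : (g.isolatedPt n).1 (.inr ξ) = g.sgn ξ n := rfl

@[simp] theorem limitPt_inl (ξ : I) (m : ℕ) : (g.limitPt ξ).1 (.inl m) = 0 := rfl

@[simp] theorem limitPt_inr_self (ξ : I) : (g.limitPt ξ).1 (.inr ξ) = 1 := by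
  simp [limitPt, limitCoords]

theorem limitPt_inr_of_ne {ξ η : I} (h : η ≠ ξ) : (g.limitPt ξ).1 (.inr η) = 0 := by
  simp [limitPt, limitCoords, h]

theorem space_cases (x : g.Space) : x = 0 ∨ (∃ n, x = g.isolatedPt n ∨ x = -g.isolatedPt n) ∨
    ∃ ξ, x = g.limitPt ξ ∨ x = -g.limitPt ξ := by
  obtain ⟨x, rfl | ⟨n, h | h⟩ | ⟨ξ, h | h⟩⟩ := x
  exacts [Or.inl rfl, Or.inr (Or.inl ⟨n, Or.inl (Subtype.ext h)⟩),
    Or.inr (Or.inl ⟨n, Or.inr (Subtype.ext h)⟩), Or.inr (Or.inr ⟨ξ, Or.inl (Subtype.ext h)⟩),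
    Or.inr (Or.inr ⟨ξ, Or.inr (Subtype.ext h)⟩)]

/-- The odd continuous functions on the space of `g`. -/
def oddFunctions : Submodule ℝ C(g.Space, ℝ) where
  carrier := {f | ∀ x, f (-x) = -f x}
  add_mem' := fun {f h} hf hh x => by
    simp only [ContinuousMap.add_apply, hf x, hh x]; ring
  zero_mem' := fun x => by simp
  smul_mem' := fun r f hf x => by simp [hf x]

variable {g} in
theorem odd_neg (z : g.oddFunctions) (x : g.Space) : (z : C(g.Space, ℝ)) (-x) = -z.1 x := z.2 x

variable {g} in
theorem odd_zero (z : g.oddFunctions) : (z : C(g.Space, ℝ)) 0 = 0 := by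
  have := odd_neg z 0
  rw [neg_zero'] at this
  linarith

theorem isClosed_oddFunctions : IsClosed (g.oddFunctions : Set C(g.Space, ℝ)) := by
  have : (g.oddFunctions : Set C(g.Space, ℝ)) = ⋂ x, {f | f (-x) = -f x} := by
    ext f; simp [oddFunctions]
  rw [this]
  exact isClosed_iInter fun x => isClosed_eq (by fun_prop) (by fun_prop)

variable {g} in
/-- An odd function which is bounded at the points of `g` is bounded. -/
theorem abs_odd_le {z : g.oddFunctions} {r : ℝ} (hr : 0 ≤ r) (hp : ∀ n, |z.1 (g.isolatedPt n)| ≤ r)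
    (he : ∀ ξ, |z.1 (g.limitPt ξ)| ≤ r) (x : g.Space) : |z.1 x| ≤ r := by
  rcases g.space_cases x with rfl | ⟨n, rfl | rfl⟩ | ⟨ξ, rfl | rfl⟩
  · simpa [odd_zero] using hr
  · exact hp n
  · rw [odd_neg, abs_neg]; exact hp n
  · exact he ξ
  · rw [odd_neg, abs_neg]; exact he ξ

variable {g} in
theorem norm_odd_le {z : g.oddFunctions} {r : ℝ} (hr : 0 ≤ r)
    (hp : ∀ n, |z.1 (g.isolatedPt n)| ≤ r) (he : ∀ ξ, |z.1 (g.limitPt ξ)| ≤ r) : ‖z‖ ≤ r :=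
  (ContinuousMap.norm_le _ hr).2 (abs_odd_le hr hp he)

variable {g} in
theorem abs_odd_apply_le_norm (z : g.oddFunctions) (x : g.Space) : |z.1 x| ≤ ‖z‖ :=
  z.1.norm_coe_le_norm x

/-- The coordinate functions. -/
def coord (j : ℕ ⊕ I) : g.oddFunctions :=
  ⟨⟨fun x => x.1 j, (continuous_apply j).comp continuous_subtype_val⟩, fun x => by simp⟩

@[simp] theorem coord_apply (j : ℕ ⊕ I) (x : g.Space) : (g.coord j).1 x = x.1 j := rfl

/-- The odd part of a function. -/
noncomputable def oddPart (f : C(g.Space, ℝ)) : g.oddFunctions :=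
  ⟨(1 / 2 : ℝ) • (f - f.comp ⟨_, g.continuous_neg'⟩), fun x => by simp [neg_neg']; ring⟩

theorem oddPart_apply (f : C(g.Space, ℝ)) (x : g.Space) :
    (g.oddPart f).1 x = (f x - f (-x)) / 2 := by
  simp [oddPart]; ring

theorem exists_projection : ∃ P : C(g.Space, ℝ) →L[ℝ] C(g.Space, ℝ), ‖P‖ = 1 ∧
    (∀ f, P (P f) = P f) ∧ range ⇑P = (g.oddFunctions : Set C(g.Space, ℝ)) := by
  let P : C(g.Space, ℝ) →L[ℝ] C(g.Space, ℝ) := LinearMap.mkContinuous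
    { toFun := fun f => (g.oddPart f).1
      map_add' := fun f h => by ext x; simp [oddPart_apply]; ring
      map_smul' := fun r f => by ext x; simp [oddPart_apply]; ring } 1 (by
    intro f
    rw [one_mul]
    refine (ContinuousMap.norm_le _ (norm_nonneg _)).2 fun x => ?_
    have h1 := abs_le.1 (f.norm_coe_le_norm x)
    have h2 := abs_le.1 (f.norm_coe_le_norm (-x))
    change |(g.oddPart f).1 x| ≤ _
    rw [oddPart_apply, abs_le]
    constructor <;> linarith [h1.1, h1.2, h2.1, h2.2])
  have hP : ∀ f x, P f x = (f x - f (-x)) / 2 := fun f x => g.oddPart_apply f x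
  have hfix : ∀ z : g.oddFunctions, P z.1 = z.1 := fun z => by
    ext x; rw [hP, odd_neg]; ring
  refine ⟨P, le_antisymm (LinearMap.mkContinuous_norm_le _ zero_le_one _) ?_,
    fun f => hfix (g.oddPart f), ?_⟩
  · have h1 := P.le_opNorm (g.coord (.inl 0)).1
    rw [hfix] at h1
    have h2 : 0 < ‖(g.coord (.inl 0)).1‖ := by
      refine norm_pos_iff.2 fun h => ?_
      have := congrArg (fun f : C(g.Space, ℝ) => f (g.isolatedPt 0)) h
      simp at this
    exact le_of_mul_le_mul_right (by linarith) h2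
  · ext f
    exact ⟨fun ⟨h, hh⟩ => hh ▸ (g.oddPart h).2, fun hf => ⟨f, hfix ⟨f, hf⟩⟩⟩

theorem _root_.nonempty_equiv_of_bijective {E F : Type*} [NormedAddCommGroup E] [NormedSpace ℝ E]
    [CompleteSpace E] [NormedAddCommGroup F] [NormedSpace ℝ F] [CompleteSpace F] (f : E →L[ℝ] F)
    (hinj : f.ker = ⊥) (hsurj : f.range = ⊤) : Nonempty (E ≃L[ℝ] F) :=
  ⟨ContinuousLinearEquiv.ofBijective f hinj hsurj⟩

theorem _root_.continuous_tsum_of_disjoint {J X : Type*} [TopologicalSpace X] {φ : J → X → ℝ}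
    (hφ : ∀ j, Continuous (φ j)) (hle : ∀ j x, |φ j x| ≤ 1)
    (hdisj : ∀ x i j, i ≠ j → φ i x = 0 ∨ φ j x = 0) {c : J → ℝ}
    (hc : Filter.Tendsto c Filter.cofinite (nhds 0)) :
    Continuous fun x => ∑' j, c j * φ j x := by
  refine continuous_of_uniform_approx_of_continuous fun u hu => ?_
  obtain ⟨ε, hε, hu⟩ := Metric.mem_uniformity_dist.1 hu
  have hfin : {j | ε / 2 ≤ |c j|}.Finite := by
    have := hc (Metric.ball_mem_nhds 0 (half_pos hε))
    simpa [Filter.mem_map, Filter.mem_cofinite, compl_def] using this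
  refine ⟨fun x => ∑ j ∈ hfin.toFinset, c j * φ j x, by fun_prop, fun x => hu ?_⟩
  have key : ∀ i, φ i x ≠ 0 → ∀ j, j ≠ i → c j * φ j x = 0 := fun i hi j hj => by
    rw [(hdisj x j i hj).resolve_right hi, mul_zero]
  rw [Real.dist_eq]
  beta_reduce
  by_cases h : ∃ i, φ i x ≠ 0
  · obtain ⟨i, hi⟩ := h
    rw [tsum_eq_single i (key i hi)]
    by_cases hmem : i ∈ hfin.toFinset
    · rw [Finset.sum_eq_single_of_mem i hmem fun j _ hj => key i hi j hj]
      simpa using hε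
    · rw [Finset.sum_eq_zero fun j hj => key i hi j fun h => hmem (h ▸ hj), sub_zero, abs_mul]
      have h1 : |c i| < ε / 2 := by simpa using hmem
      have h2 := mul_le_mul h1.le (hle i x) (abs_nonneg _) (half_pos hε).le
      linarith
  · push Not at h
    simpa [h] using hε

theorem disjoint_inl (x : g.Space) {i j : ℕ} (h : i ≠ j) : x.1 (.inl i) = 0 ∨ x.1 (.inl j) = 0 := by
  rcases g.space_cases x with rfl | ⟨n, rfl | rfl⟩ | ⟨ξ, rfl | rfl⟩ <;>
    simp [isolatedPt_inl] <;> omega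

theorem disjoint_inr {x : g.Space} (hx : ∀ n, x.1 (.inl n) = 0) {ξ η : I} (h : ξ ≠ η) :
    x.1 (.inr ξ) = 0 ∨ x.1 (.inr η) = 0 := by
  have key : ∀ ζ, (g.limitPt ζ).1 (.inr ξ) = 0 ∨ (g.limitPt ζ).1 (.inr η) = 0 := fun ζ => by
    by_cases hξ : ξ = ζ
    · exact Or.inr (g.limitPt_inr_of_ne fun h' => h (hξ.trans h'.symm))
    · exact Or.inl (g.limitPt_inr_of_ne hξ)
  rcases g.space_cases x with rfl | ⟨n, rfl | rfl⟩ | ⟨ζ, rfl | rfl⟩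
  · simp
  · simpa using hx n
  · simpa using hx n
  · exact key ζ
  · simpa using key ζ

theorem abs_apply_le_one (x : g.Space) (j : ℕ ⊕ I) : |x.1 j| ≤ 1 := by
  rcases (g.carrier_eq.subset x.2).1 j with h | h | h <;> rw [h] <;> simp

variable {g} in
theorem finite_isolatedPt {f : C(g.Space, ℝ)} {ε : ℝ}
    (hf : ∀ x : g.Space, (∀ n, x.1 (.inl n) = 0) → |f x| < ε) :
    {n | ε ≤ |f (g.isolatedPt n)|}.Finite := by
  have hK : IsCompact {x | ε ≤ |f x|} := (isClosed_le continuous_const (by fun_prop)).isCompact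
  obtain ⟨t, ht⟩ := hK.elim_finite_subcover (fun n : ℕ => {x : g.Space | x.1 (.inl n) ≠ 0})
    (fun n => isOpen_ne_fun (g.coord (.inl n)).1.continuous continuous_const) (fun x hx => by
      by_contra h
      simp only [mem_iUnion, not_exists] at h
      exact absurd (hf x fun n => not_not.1 (h n)) (not_lt.2 hx))
  refine t.finite_toSet.subset fun n hn => ?_
  obtain ⟨m, hm, hne⟩ := mem_iUnion₂.1 (ht hn)
  have : m = n := by by_contra h; exact hne (by simp [isolatedPt_inl, h])
  exact this ▸ hm

theorem tendsto_limitPt : Filter.Tendsto g.limitPt Filter.cofinite (nhds 0) := by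
  rw [tendsto_subtype_rng, tendsto_pi_nhds]
  rintro (m | η)
  · exact tendsto_const_nhds
  · refine tendsto_const_nhds.congr' ?_
    have : ∀ᶠ ξ in Filter.cofinite, ξ ≠ η := (Set.finite_singleton η).compl_mem_cofinite
    filter_upwards [this] with ξ h
    simp [g.limitPt_inr_of_ne h.symm]

variable {g} in
theorem tendsto_odd_limitPt (z : g.oddFunctions) :
    Filter.Tendsto (fun ξ => z.1 (g.limitPt ξ)) Filter.cofinite (nhds 0) := by
  have := (z.1.continuous.tendsto 0).comp g.tendsto_limitPt
  rwa [odd_zero] at this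

variable {g} in
theorem finite_limitPt (z : g.oddFunctions) {ε : ℝ} (hε : 0 < ε) :
    {ξ | ε ≤ |z.1 (g.limitPt ξ)|}.Finite := by
  have := tendsto_odd_limitPt z (Metric.ball_mem_nhds 0 hε)
  simpa [Filter.mem_map, Filter.mem_cofinite, compl_def] using this

variable {g} in
theorem abs_lt_of_inl_eq_zero {z : g.oddFunctions} {ε : ℝ} (hε : 0 < ε)
    (hz : ∀ ξ, |z.1 (g.limitPt ξ)| < ε) {x : g.Space} (hx : ∀ n, x.1 (.inl n) = 0) :
    |z.1 x| < ε := by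
  rcases g.space_cases x with rfl | ⟨n, rfl | rfl⟩ | ⟨ξ, rfl | rfl⟩
  · simpa [odd_zero] using hε
  · simpa using hx n
  · simpa using hx n
  · exact hz ξ
  · rw [odd_neg, abs_neg]; exact hz ξ

/-- The odd functions vanishing at all limit points. -/
def vanishing : Submodule ℝ g.oddFunctions where
  carrier := {z | ∀ ξ, z.1 (g.limitPt ξ) = 0}
  add_mem' := fun {y z} hy hz ξ => by simp [hy ξ, hz ξ]
  zero_mem' := fun ξ => by simp
  smul_mem' := fun r z hz ξ => by simp [hz ξ]

theorem isClosed_vanishing : IsClosed (g.vanishing : Set g.oddFunctions) := by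
  have : (g.vanishing : Set g.oddFunctions) = ⋂ ξ, {z | z.1 (g.limitPt ξ) = 0} := by
    ext f; exact (mem_iInter (s := fun ξ => {z : g.oddFunctions | z.1 (g.limitPt ξ) = 0})).symm
  rw [this]
  exact isClosed_iInter fun x => isClosed_eq (by fun_prop) (by fun_prop)

instance : CompleteSpace g.oddFunctions := g.isClosed_oddFunctions.completeSpace_coe

instance : CompleteSpace g.vanishing := g.isClosed_vanishing.completeSpace_coe

theorem tendsto_isolatedPt (y : g.vanishing) :
    Filter.Tendsto (fun n => y.1.1 (g.isolatedPt n)) Filter.cofinite (nhds 0) := by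
  refine Metric.tendsto_nhds.2 fun ε hε => ?_
  have := finite_isolatedPt (f := y.1.1) (ε := ε) fun x hx =>
    abs_lt_of_inl_eq_zero hε (fun ξ => by rw [y.2 ξ]; simpa using hε) hx
  simpa [Filter.eventually_cofinite] using this

/-- The restriction of a function vanishing at the limit points to the isolated points. -/
noncomputable def restrictIsolated : g.vanishing →L[ℝ] C₀(ℕ, ℝ) :=
  LinearMap.mkContinuous (E := g.vanishing) (F := C₀(ℕ, ℝ))
    { toFun := fun y => ⟨⟨fun n => y.1.1 (g.isolatedPt n), continuous_of_discreteTopology⟩, by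
        rw [Filter.cocompact_eq_cofinite]; exact g.tendsto_isolatedPt y⟩
      map_add' := fun y z => by ext n; simp
      map_smul' := fun r y => by ext n; simp } 1 fun y => by
    rw [one_mul, ← ZeroAtInftyContinuousMap.norm_toBCF_eq_norm]
    exact (BoundedContinuousFunction.norm_le (norm_nonneg y)).2
      fun n => abs_odd_apply_le_norm y.1 (g.isolatedPt n)

theorem nonempty_vanishing_equiv : Nonempty (g.vanishing ≃L[ℝ] C₀(ℕ, ℝ)) := by
  have hap : ∀ y n, g.restrictIsolated y n = y.1.1 (g.isolatedPt n) := fun _ _ => rfl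
  have hker : (g.restrictIsolated : g.vanishing →ₗ[ℝ] C₀(ℕ, ℝ)).ker = ⊥ := by
    refine LinearMap.ker_eq_bot'.2 fun y hy => ?_
    have h := norm_odd_le (z := y.1) le_rfl (fun n => by
      rw [← hap y n, show g.restrictIsolated y = 0 from hy]; simp) (fun ξ => by rw [y.2 ξ]; simp)
    exact Subtype.ext (norm_le_zero_iff.1 h)
  have hrange : (g.restrictIsolated : g.vanishing →ₗ[ℝ] C₀(ℕ, ℝ)).range = ⊤ := by
    refine LinearMap.range_eq_top.2 fun c => ?_
    have hc : Filter.Tendsto c Filter.cofinite (nhds 0) := by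
      rw [← Filter.cocompact_eq_cofinite]; exact c.zero_at_infty'
    have hcont := continuous_tsum_of_disjoint (φ := fun (n : ℕ) (x : g.Space) => x.1 (.inl n))
      (fun n => (g.coord (.inl n)).1.continuous) (fun n x => g.abs_apply_le_one x _)
      (fun x i j h => g.disjoint_inl x h) hc
    refine ⟨⟨⟨⟨_, hcont⟩, fun x => ?_⟩, fun ξ => ?_⟩, ?_⟩
    · simp [tsum_neg]
    · simp
    · ext n
      refine (tsum_eq_single n fun m hm => ?_).trans ?_
      · simp [isolatedPt_inl, hm]
      · simp
  exact nonempty_equiv_of_bijective (E := g.vanishing) (F := C₀(ℕ, ℝ))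
    g.restrictIsolated hker hrange

section Quotient

variable [TopologicalSpace I] [DiscreteTopology I]

/-- The restriction of an odd function to the limit points. -/
noncomputable def restrictLimit : g.oddFunctions →L[ℝ] C₀(I, ℝ) :=
  LinearMap.mkContinuous
    { toFun := fun z => ⟨⟨fun ξ => z.1 (g.limitPt ξ), continuous_of_discreteTopology⟩, by
        rw [Filter.cocompact_eq_cofinite]; exact tendsto_odd_limitPt z⟩
      map_add' := fun y z => by ext n; simp
      map_smul' := fun r y => by ext n; simp } 1 fun z => by
    rw [one_mul, ← ZeroAtInftyContinuousMap.norm_toBCF_eq_norm]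
    exact (BoundedContinuousFunction.norm_le (norm_nonneg _)).2
      fun n => abs_odd_apply_le_norm z _

theorem restrictLimit_apply (z : g.oddFunctions) (ξ : I) :
    g.restrictLimit z ξ = z.1 (g.limitPt ξ) := rfl

theorem surjective_restrictLimit : Surjective g.restrictLimit := by
  intro c
  have hc : Filter.Tendsto c Filter.cofinite (nhds 0) := by
    rw [← Filter.cocompact_eq_cofinite]; exact c.zero_at_infty'
  let D : Set g.Space := {x | ∀ n, x.1 (.inl n) = 0}
  have hD : IsClosed D := by
    have : D = ⋂ n, {x | (g.coord (.inl n)).1 x = 0} := by ext x; simp [D]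
    rw [this]
    exact isClosed_iInter fun n => isClosed_eq (by fun_prop) (by fun_prop)
  have hcont := continuous_tsum_of_disjoint (φ := fun (ξ : I) (x : D) => x.1.1 (.inr ξ))
    (fun ξ => (g.coord (.inr ξ)).1.continuous.comp continuous_subtype_val)
    (fun n x => g.abs_apply_le_one x.1 _) (fun x i j h => g.disjoint_inr x.2 h) hc
  obtain ⟨f, hf⟩ := ContinuousMap.exists_restrict_eq hD ⟨_, hcont⟩
  have hfD : ∀ x : D, f x.1 = ∑' ξ, c ξ * x.1.1 (.inr ξ) := fun x => DFunLike.congr_fun hf x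
  refine ⟨g.oddPart f, ?_⟩
  ext ξ
  rw [restrictLimit_apply, oddPart_apply]
  have h1 : ∑' η, c η * (g.limitPt ξ).1 (.inr η) = c ξ := by
    rw [tsum_eq_single ξ fun η h => by rw [g.limitPt_inr_of_ne h, mul_zero]]
    simp
  have h2 := hfD ⟨g.limitPt ξ, fun n => rfl⟩
  have h3 := hfD ⟨-g.limitPt ξ, fun n => by simp⟩
  simp only [coe_neg, Pi.neg_apply, mul_neg, tsum_neg] at h2 h3
  rw [h2, h3, h1]
  ring

theorem nonempty_quotient_equiv : Nonempty ((g.oddFunctions ⧸ g.vanishing) ≃L[ℝ] C₀(I, ℝ)) := by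
  have hker : g.vanishing = LinearMap.ker (g.restrictLimit : g.oddFunctions →ₗ[ℝ] C₀(I, ℝ)) := by
    ext z
    refine ⟨fun h => ?_, fun h ξ => ?_⟩
    · refine LinearMap.mem_ker.2 ?_
      ext ξ; exact h ξ
    · exact DFunLike.congr_fun (LinearMap.mem_ker.1 h) ξ
  let Q : (g.oddFunctions ⧸ g.vanishing) →L[ℝ] C₀(I, ℝ) :=
    ⟨g.vanishing.liftQ (g.restrictLimit : g.oddFunctions →ₗ[ℝ] C₀(I, ℝ)) hker.le,
      g.restrictLimit.continuous.quotient_lift _⟩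
  have : IsClosed (g.vanishing : Set g.oddFunctions) := g.isClosed_vanishing
  have hQ : (Q : (g.oddFunctions ⧸ g.vanishing) →ₗ[ℝ] C₀(I, ℝ)).ker = ⊥ :=
    Submodule.ker_liftQ_eq_bot _ _ _ hker.ge
  have hrange : (Q : (g.oddFunctions ⧸ g.vanishing) →ₗ[ℝ] C₀(I, ℝ)).range = ⊤ := by
    refine LinearMap.range_eq_top.2 fun c => ?_
    obtain ⟨z, hz⟩ := g.surjective_restrictLimit c
    exact ⟨Submodule.Quotient.mk z, hz⟩
  exact nonempty_equiv_of_bijective (E := g.oddFunctions ⧸ g.vanishing) (F := C₀(I, ℝ)) Q hQ hrange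

end Quotient

theorem _root_.exists_norm_bounds_of_equiv {E F : Type*} [NormedAddCommGroup E] [NormedSpace ℝ E]
    [NormedAddCommGroup F] [NormedSpace ℝ F] (T : E ≃L[ℝ] F) :
    ∃ A B : ℝ, 0 < B ∧ (∀ z, ‖T z‖ ≤ A * ‖z‖) ∧ ∀ z, ‖z‖ ≤ B * ‖T z‖ := by
  refine ⟨‖(T : E →L[ℝ] F)‖, ‖(T.symm : F →L[ℝ] E)‖ + 1, by positivity,
    (T : E →L[ℝ] F).le_opNorm, fun z => ?_⟩
  have h := (T.symm : F →L[ℝ] E).le_opNorm (T z)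
  simp only [ContinuousLinearEquiv.coe_coe, ContinuousLinearEquiv.symm_apply_apply] at h
  linarith [norm_nonneg (T z)]

theorem _root_.abs_sum_le_one_of_disjoint {J : Type*} {F : Finset J} {a : J → ℝ}
    (ha : ∀ i ∈ F, |a i| ≤ 1) (hdisj : ∀ i ∈ F, ∀ j ∈ F, i ≠ j → a i = 0 ∨ a j = 0) :
    |∑ i ∈ F, a i| ≤ 1 := by
  by_cases h : ∃ i ∈ F, a i ≠ 0
  · obtain ⟨i, hi, hne⟩ := h
    rw [Finset.sum_eq_single_of_mem i hi fun j hj hji =>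
      (hdisj j hj i hi hji).resolve_right hne]
    exact ha i hi
  · push Not at h
    simp [Finset.sum_eq_zero h]

theorem coe_sum_smul_coord {J : Type*} (F : Finset J) (a : J → ℝ) (e : J → ℕ ⊕ I) (x : g.Space) :
    (∑ i ∈ F, a i • g.coord (e i)).1 x = ∑ i ∈ F, a i * x.1 (e i) := by
  simp [ContinuousMap.sum_apply]

theorem norm_sum_coord_inl_le {F : Finset ℕ} {s : ℕ → ℝ} (hs : ∀ j, |s j| ≤ 1) :
    ‖∑ j ∈ F, s j • g.coord (.inl j)‖ ≤ 1 := by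
  have key : ∀ x : g.Space, |(∑ j ∈ F, s j • g.coord (.inl j)).1 x| ≤ 1 := fun x => by
    rw [coe_sum_smul_coord]
    refine abs_sum_le_one_of_disjoint (fun j _ => ?_) fun i _ j _ h => ?_
    · rw [abs_mul]
      exact mul_le_one₀ (hs j) (abs_nonneg _) (g.abs_apply_le_one x _)
    · exact (g.disjoint_inl x h).imp (fun h => by rw [h, mul_zero]) fun h => by rw [h, mul_zero]
  exact norm_odd_le zero_le_one (fun n => key _) fun ξ => key _

/-- The coordinate function of `ξ`, with its values at the first `m` isolated points removed. -/
noncomputable def coordTail (m : ℕ) (ξ : I) : g.oddFunctions :=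
  g.coord (.inr ξ) - ∑ j ∈ Finset.range m, (g.sgn ξ j : ℝ) • g.coord (.inl j)

theorem coordTail_apply (m : ℕ) (ξ : I) (x : g.Space) : (g.coordTail m ξ).1 x =
    x.1 (.inr ξ) - ∑ j ∈ Finset.range m, (g.sgn ξ j : ℝ) * x.1 (.inl j) := by
  rw [← coe_sum_smul_coord]; rfl

theorem coordTail_isolatedPt (m : ℕ) (ξ : I) (n : ℕ) :
    (g.coordTail m ξ).1 (g.isolatedPt n) = if n < m then 0 else (g.sgn ξ n : ℝ) := by
  rw [coordTail_apply]
  split_ifs with h <;> simp [isolatedPt_inl, h]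

theorem abs_sgn_cast_le (ξ : I) (n : ℕ) : |(g.sgn ξ n : ℝ)| ≤ 1 := by
  exact_mod_cast g.abs_sgn_le ξ n

theorem eventually_norm_sum_coordTail_le (F : Finset I) {s : I → ℝ} (hs : ∀ ξ, |s ξ| ≤ 1) :
    ∀ᶠ m in Filter.atTop, ‖∑ ξ ∈ F, s ξ • g.coordTail m ξ‖ ≤ 1 := by
  have hfin : (⋃ p ∈ (F : Set I).offDiag,
      support (g.sgn p.1) ∩ support (g.sgn p.2)).Finite :=
    F.finite_toSet.offDiag.biUnion fun p hp => g.finite_inter _ _ hp.2.2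
  obtain ⟨m₀, hm₀⟩ := hfin.bddAbove
  filter_upwards [Filter.eventually_gt_atTop m₀] with m hm
  have hval : ∀ x : g.Space, (∑ ξ ∈ F, s ξ • g.coordTail m ξ).1 x =
      ∑ ξ ∈ F, s ξ * (g.coordTail m ξ).1 x := fun x => by
    simp [ContinuousMap.sum_apply]
  have hprod : ∀ ξ {t : ℝ}, |t| ≤ 1 → |s ξ * t| ≤ 1 := fun ξ t ht => by
    rw [abs_mul]; exact mul_le_one₀ (hs ξ) (abs_nonneg _) ht
  refine norm_odd_le zero_le_one (fun n => ?_) fun η => ?_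
  · simp only [hval, coordTail_isolatedPt]
    split_ifs with h
    · simp
    · refine abs_sum_le_one_of_disjoint (fun ξ _ => hprod ξ (g.abs_sgn_cast_le ξ n))
        fun ξ hξ η hη hne => ?_
      by_contra! hcon
      have hmem : n ∈ support (g.sgn ξ) ∩ support (g.sgn η) :=
        ⟨fun h0 => hcon.1 (by rw [h0]; simp), fun h0 => hcon.2 (by rw [h0]; simp)⟩
      have := hm₀ (mem_iUnion₂.2 ⟨(ξ, η), ⟨hξ, hη, hne⟩, hmem⟩)
      omega
  · have h0 : ∀ ξ, (g.coordTail m ξ).1 (g.limitPt η) = (g.limitPt η).1 (.inr ξ) := fun ξ => by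
      simp [coordTail_apply]
    simp only [hval, h0]
    refine abs_sum_le_one_of_disjoint (fun ξ _ => hprod ξ (g.abs_apply_le_one _ _))
      fun ξ _ ζ _ hne => ?_
    exact (g.disjoint_inr (x := g.limitPt η) (fun n => rfl) hne).imp (fun h => by rw [h, mul_zero])
      fun h => by rw [h, mul_zero]

section Functional

variable {g} {C : ℝ} {l : g.oddFunctions →ₗ[ℝ] ℝ} (hl : ∀ z, |l z| ≤ C * ‖z‖)
include hl

theorem bound_nonneg_of_functional : 0 ≤ C := by
  have hpos : 0 < ‖g.coord (.inl 0)‖ := by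
    refine norm_pos_iff.2 fun h => ?_
    have := congrArg (fun f : g.oddFunctions => f.1 (g.isolatedPt 0)) h
    simp at this
  exact nonneg_of_mul_nonneg_left ((abs_nonneg _).trans (hl (g.coord (.inl 0)))) hpos

theorem sum_abs_functional_coord_inl_le (F : Finset ℕ) :
    ∑ j ∈ F, |l (g.coord (.inl j))| ≤ C := by
  have h1 : ∑ j ∈ F, |l (g.coord (.inl j))| =
      l (∑ j ∈ F, (SignType.sign (l (g.coord (.inl j))) : ℝ) • g.coord (.inl j)) := by
    simp [map_sum, sign_mul_self]
  have h2 := g.norm_sum_coord_inl_le (F := F)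
    (s := fun j => (SignType.sign (l (g.coord (.inl j))) : ℝ)) fun j => by
      rcases SignType.sign (l (g.coord (.inl j))) with _ | _ | _ <;> simp
  rw [h1]
  exact (le_abs_self _).trans ((hl _).trans
    (mul_le_of_le_one_right (bound_nonneg_of_functional hl) h2))

theorem summable_functional_coord (ξ : I) :
    Summable fun j => l (g.coord (.inl j)) * (g.sgn ξ j : ℝ) :=
  summable_mul_of_sum_le (sum_abs_functional_coord_inl_le hl) fun j => g.abs_sgn_cast_le ξ j

theorem sum_abs_defect_le (F : Finset I) :
    ∑ ξ ∈ F, |l (g.coord (.inr ξ)) - ∑' j, l (g.coord (.inl j)) * (g.sgn ξ j : ℝ)| ≤ C := by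
  set κ : I → ℝ := fun ξ => l (g.coord (.inr ξ)) - ∑' j, l (g.coord (.inl j)) * (g.sgn ξ j : ℝ)
    with hκ
  let s : I → ℝ := fun ξ => SignType.sign (κ ξ)
  have hs : ∀ ξ, |s ξ| ≤ 1 := fun ξ => by
    change |((SignType.sign (κ ξ) : SignType) : ℝ)| ≤ 1
    rcases SignType.sign (κ ξ) with _ | _ | _ <;> simp
  have hlim : Filter.Tendsto (fun m => l (∑ ξ ∈ F, s ξ • g.coordTail m ξ)) Filter.atTop
      (nhds (∑ ξ ∈ F, s ξ * κ ξ)) := by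
    simp only [map_sum, map_smul, smul_eq_mul, coordTail, map_sub]
    refine tendsto_finsetSum _ fun ξ _ => (tendsto_const_nhds.sub ?_).const_mul _
    simpa only [mul_comm] using (summable_functional_coord hl ξ).hasSum.tendsto_sum_nat
  have h1 : ∑ ξ ∈ F, |κ ξ| = ∑ ξ ∈ F, s ξ * κ ξ := by simp [s, sign_mul_self]
  rw [h1]
  refine le_of_tendsto hlim ?_
  filter_upwards [g.eventually_norm_sum_coordTail_le F hs] with m hm
  exact (le_abs_self _).trans ((hl _).trans
    (mul_le_of_le_one_right (bound_nonneg_of_functional hl) hm))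

theorem countable_defect :
    {ξ | l (g.coord (.inr ξ)) - ∑' j, l (g.coord (.inl j)) * (g.sgn ξ j : ℝ) ≠ 0}.Countable := by
  have h := (summable_of_sum_le (fun _ => abs_nonneg _)
    (sum_abs_defect_le hl)).countable_support
  refine h.mono fun ξ hξ => ?_
  simpa using hξ

end Functional

variable {g} in
/-- Rational combinations of the coordinate functions are dense in the odd functions. -/
theorem exists_rat_approx (z : g.oddFunctions) {ε : ℝ} (hε : 0 < ε) :
    ∃ (F : Finset I) (N : Finset ℕ) (a : I → ℚ) (b : ℕ → ℚ),
      ‖z - (∑ ξ ∈ F, (a ξ : ℝ) • g.coord (.inr ξ) + ∑ n ∈ N, (b n : ℝ) • g.coord (.inl n))‖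
        ≤ ε := by
  classical
  have hrat : ∀ r : ℝ, ∃ q : ℚ, |r - q| < ε := fun r => by
    obtain ⟨q, hq1, hq2⟩ := exists_rat_btwn (show r - ε < r by linarith)
    exact ⟨q, abs_lt.2 ⟨by linarith, by linarith⟩⟩
  choose q hq using hrat
  let F := (finite_limitPt z hε).toFinset
  let y := z - ∑ ξ ∈ F, (q (z.1 (g.limitPt ξ)) : ℝ) • g.coord (.inr ξ)
  have hy : ∀ η, |y.1 (g.limitPt η)| < ε := fun η => by
    have hval : y.1 (g.limitPt η) = z.1 (g.limitPt η) -
        ∑ ξ ∈ F, (q (z.1 (g.limitPt ξ)) : ℝ) * (g.limitPt η).1 (.inr ξ) := by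
      rw [← coe_sum_smul_coord]; rfl
    have h0 : ∀ ξ ∈ F, ξ ≠ η →
        (q (z.1 (g.limitPt ξ)) : ℝ) * (g.limitPt η).1 (.inr ξ) = 0 := fun ξ _ h => by
      rw [g.limitPt_inr_of_ne h, mul_zero]
    rw [hval]
    by_cases hη : η ∈ F
    · rw [Finset.sum_eq_single_of_mem η hη h0]
      simpa using hq _
    · rw [Finset.sum_eq_zero fun ξ hξ => h0 ξ hξ fun h => hη (h ▸ hξ), sub_zero]
      simpa [F] using hη
  have hfin := finite_isolatedPt (f := y.1) (ε := ε) fun x hx => abs_lt_of_inl_eq_zero hε hy hx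
  let N := hfin.toFinset
  refine ⟨F, N, fun ξ => q (z.1 (g.limitPt ξ)), fun n => q (y.1 (g.isolatedPt n)), ?_⟩
  rw [← sub_sub]
  have hval : ∀ x, (y - ∑ n ∈ N, (q (y.1 (g.isolatedPt n)) : ℝ) • g.coord (.inl n)).1 x =
      y.1 x - ∑ n ∈ N, (q (y.1 (g.isolatedPt n)) : ℝ) * x.1 (.inl n) := fun x => by
    rw [← coe_sum_smul_coord]; rfl
  refine norm_odd_le (z := y - ∑ n ∈ N, (q (y.1 (g.isolatedPt n)) : ℝ) • g.coord (.inl n))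
    hε.le (fun n => ?_) fun η => ?_
  · rw [hval]
    have h0 : ∀ m ∈ N, m ≠ n →
        (q (y.1 (g.isolatedPt m)) : ℝ) * (g.isolatedPt n).1 (.inl m) = 0 := fun m _ h => by
      simp [isolatedPt_inl, h]
    by_cases hn : n ∈ N
    · rw [Finset.sum_eq_single_of_mem n hn h0]
      simpa using (hq _).le
    · rw [Finset.sum_eq_zero fun m hm => h0 m hm fun h => hn (h ▸ hm), sub_zero]
      simpa [N] using (not_le.1 (fun h => hn (hfin.mem_toFinset.2 h))).le
  · rw [hval]
    simpa using (hy η).le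

variable {g} in
/-- For families satisfying the combinatorial property `hg`, the lattice structure given by a
sequence of functionals which is large on the coordinates is not compatible with odd functions. -/
theorem exists_forall_functional_ne (hg : ∀ ν c : ℕ → ℕ → ℝ, HasLargeDiagonal ν →
      ∀ S : Set I, S.Countable → ∃ ξ ∉ S,
        ¬ IsApprox (generatedSpan ν c g.sgn) (fun k => |pairing ν (g.sgn ξ) k|))
    {C : ℝ} {l : ℕ → g.oddFunctions →ₗ[ℝ] ℝ} (hl : ∀ k z, |l k z| ≤ C * ‖z‖)
    (hdiag : ∀ k, 1 ≤ |l k (g.coord (.inl k))|) :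
    ∃ ξ, ∀ z, ∃ k, l k z ≠ |l k (g.coord (.inr ξ))| := by
  have hC := bound_nonneg_of_functional (hl 0)
  let ν : ℕ → ℕ → ℝ := fun k j => l k (g.coord (.inl j))
  let κ : I → ℕ → ℝ := fun ξ k => l k (g.coord (.inr ξ)) - pairing ν (g.sgn ξ) k
  have hν : HasLargeDiagonal ν :=
    ⟨⟨C, fun k => sum_abs_functional_coord_inl_le (hl k)⟩, hdiag⟩
  let S : Set I := ⋃ k, {ξ | κ ξ k ≠ 0}
  have hS : S.Countable := countable_iUnion fun k => countable_defect (hl k)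
  obtain ⟨c, hc⟩ := ((hS.image κ).insert 0).exists_eq_range (insert_nonempty _ _)
  obtain ⟨ξ, hξ, hnot⟩ := hg ν c hν S hS
  refine ⟨ξ, fun z => ?_⟩
  by_contra! hz
  refine hnot ?_
  have hκ : ∀ η, κ η ∈ generatedSpan ν c g.sgn := fun η => by
    have : κ η ∈ range c := by
      rw [← hc]
      by_cases h : η ∈ S
      · exact Or.inr (mem_image_of_mem κ h)
      · left
        funext k
        by_contra hk
        exact h (mem_iUnion.2 ⟨k, hk⟩)
    obtain ⟨n, hn⟩ := this
    exact Submodule.subset_span ⟨.inr (.inr n), hn⟩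
  have hinr : ∀ η, (fun k => l k (g.coord (.inr η))) ∈ generatedSpan ν c g.sgn := fun η => by
    have h1 : pairing ν (g.sgn η) ∈ generatedSpan ν c g.sgn :=
      Submodule.subset_span ⟨.inl η, rfl⟩
    convert add_mem (hκ η) h1 using 1
    funext k
    simp [κ]
  have hinl : ∀ j, (fun k => l k (g.coord (.inl j))) ∈ generatedSpan ν c g.sgn := fun j =>
    Submodule.subset_span ⟨.inr (.inl j), rfl⟩
  have hpair : ∀ k, l k (g.coord (.inr ξ)) = pairing ν (g.sgn ξ) k := fun k => by
    by_contra h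
    exact hξ (mem_iUnion.2 ⟨k, sub_ne_zero.2 h⟩)
  obtain ⟨F, N, a, b, hab⟩ := exists_rat_approx z
    (show 0 < 1 / (20 * (C + 1)) by positivity)
  refine ⟨1 / 20, by norm_num, ∑ η ∈ F, a η • (fun k => l k (g.coord (.inr η))) +
    ∑ n ∈ N, b n • (fun k => l k (g.coord (.inl n))),
    add_mem (sum_mem fun η _ => Submodule.smul_mem _ _ (hinr η))
      (sum_mem fun n _ => Submodule.smul_mem _ _ (hinl n)), fun k => ?_⟩
  beta_reduce
  rw [← hpair, ← hz k]
  have hw : l k z - (∑ η ∈ F, a η • (fun k => l k (g.coord (.inr η))) +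
      ∑ n ∈ N, b n • (fun k => l k (g.coord (.inl n)))) k =
      l k (z - (∑ ξ ∈ F, (a ξ : ℝ) • g.coord (.inr ξ) +
        ∑ n ∈ N, (b n : ℝ) • g.coord (.inl n))) := by
    simp [map_sub, map_add, map_sum, Finset.sum_apply, Rat.smul_def]
  rw [hw]
  refine (hl k _).trans ((mul_le_mul_of_nonneg_left hab hC).trans ?_)
  push_cast
  rw [mul_one_div, div_le_div_iff₀ (by positivity) (by norm_num)]
  linarith

variable {g} in
theorem not_equiv (hg : ∀ ν c : ℕ → ℕ → ℝ, HasLargeDiagonal ν →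
      ∀ S : Set I, S.Countable → ∃ ξ ∉ S,
        ¬ IsApprox (generatedSpan ν c g.sgn) (fun k => |pairing ν (g.sgn ξ) k|))
    {K : Type} [TopologicalSpace K] [CompactSpace K] (T : g.oddFunctions ≃L[ℝ] C(K, ℝ)) :
    False := by
  obtain ⟨A, M, hM0, hA, hM⟩ :=
    exists_norm_bounds_of_equiv (E := g.oddFunctions) (F := C(K, ℝ)) T
  have hpt : ∀ k, ∃ d : K, 1 ≤ |M * T (g.coord (.inl k)) d| := by
    intro k
    by_contra! h
    have h1 : ‖T (g.coord (.inl k))‖ < 1 / M := by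
      refine (ContinuousMap.norm_lt_iff _ (by positivity)).2 fun d => ?_
      have := h d
      rw [abs_mul, abs_of_pos hM0] at this
      rw [lt_div_iff₀ hM0, Real.norm_eq_abs]
      linarith
    rw [lt_div_iff₀ hM0] at h1
    have h2 := hM (g.coord (.inl k))
    have h3 := abs_odd_apply_le_norm (g.coord (.inl k)) (g.isolatedPt k)
    simp only [coord_apply, isolatedPt_inl_self, abs_one] at h3
    linarith
  choose d hd using hpt
  let l : ℕ → g.oddFunctions →ₗ[ℝ] ℝ := fun k =>
    { toFun := fun z => M * T z (d k)
      map_add' := fun y z => by simp [mul_add]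
      map_smul' := fun r z => by simp; ring }
  have hl : ∀ k z, |l k z| ≤ M * A * ‖z‖ := fun k z => by
    change |M * T z (d k)| ≤ _
    rw [abs_mul, abs_of_pos hM0, mul_assoc]
    exact mul_le_mul_of_nonneg_left (((T z).norm_coe_le_norm _).trans (hA z)) hM0.le
  obtain ⟨ξ, hξ⟩ := exists_forall_functional_ne hg hl hd
  obtain ⟨k, hk⟩ := hξ (T.symm |T (g.coord (.inr ξ))|)
  refine hk ?_
  change M * T (T.symm |T (g.coord (.inr ξ))|) (d k) = |M * T (g.coord (.inr ξ)) (d k)|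
  rw [T.apply_symm_apply, abs_mul, abs_of_pos hM0, ContinuousMap.abs_apply]

end SignedFamily

end OddFunctions

open Cardinal in
/-- There is a Banach space `Z` — which may be chosen to be a 1-complemented subspace
of `C(L)` for a compact Hausdorff space `L` — together with a closed subspace `Y ⊆ Z`
isomorphic to `c₀` such that `Z/Y` is isomorphic to `c₀(Γ)` for an index set `Γ` of
cardinality `𝔠`, while `Z` is not a C-space. (Here `c₀` is realized as `C₀(ℕ, ℝ)` and
`c₀(Γ)` as `C₀(Γ, ℝ)` for a discrete space `Γ`.) -/
theorem statement19 :
    ∃ (L : Type) (_ : TopologicalSpace L) (_ : CompactSpace L) (_ : T2Space L)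
      (Z : Submodule ℝ C(L, ℝ)) (_ : IsClosed (Z : Set C(L, ℝ))),
      -- Z is 1-complemented in C(L)
      (∃ P : C(L, ℝ) →L[ℝ] C(L, ℝ), ‖P‖ = 1 ∧ (∀ f, P (P f) = P f) ∧
        Set.range ⇑P = (Z : Set C(L, ℝ))) ∧
      -- Y ⊆ Z is closed and isomorphic to c₀
      ∃ (Y : Submodule ℝ ↥Z) (_ : IsClosed (Y : Set ↥Z)),
        Nonempty (↥Y ≃L[ℝ] C₀(ℕ, ℝ)) ∧
        -- Z/Y is isomorphic to c₀(Γ) with |Γ| = 𝔠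
        (∃ (Γ : Type) (_ : TopologicalSpace Γ) (_ : DiscreteTopology Γ),
          #Γ = continuum ∧ Nonempty ((↥Z ⧸ Y) ≃L[ℝ] C₀(Γ, ℝ))) ∧
        -- Z is not a C-space
        ¬ IsCSpace ↥Z := by
  obtain ⟨I, sgn, hI, hle, hfin, hg⟩ := exists_good_family
  let g : SignedFamily I := ⟨sgn, hle, hfin⟩
  let _ : TopologicalSpace I := ⊥
  have : DiscreteTopology I := ⟨rfl⟩
  refine ⟨g.Space, inferInstance, inferInstance, inferInstance, g.oddFunctions,
    g.isClosed_oddFunctions, g.exists_projection, g.vanishing, g.isClosed_vanishing,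
    g.nonempty_vanishing_equiv, ⟨I, inferInstance, inferInstance, hI, g.nonempty_quotient_equiv⟩,
    ?_⟩
  rintro ⟨K, _, _, _, ⟨T⟩⟩
  exact SignedFamily.not_equiv (g := g) hg T
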